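/- arXiv:2212.07198 — 3 statements merged into one kernel-verified Lean document; each statement's English description precedes it below -/
import Mathlib

section
/- Let a be a positive integer and p a prime number. Then a appears an odd number of times among the partial quotients a₁, …, a_{T_p} of the period of the continued fraction of √p if and only if: (1) in case a is odd: p ≡ 3 (mod 4) and a² < p < (a+2)²; (2) in case a is even: a²/4 < p < (a+2)²/4 (equivalently, a² < 4p < (a+2)²). -/
/-- The sequence of complete quotients of the continued fraction of `x`:
`α₀ = x`, `α_{k+1} = 1/(αₖ - ⌊αₖ⌋)`. -/
noncomputable def cfAlpha (x : ℝ) : ℕ → ℝ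
  | 0 => x
  | k + 1 => 1 / (cfAlpha x k - (⌊cfAlpha x k⌋ : ℝ))

/-- The partial quotients of the continued fraction of `x`: `aₖ = ⌊αₖ⌋`. -/
noncomputable def cfA (x : ℝ) (k : ℕ) : ℤ :=
  ⌊cfAlpha x k⌋

/-- The length of the minimal period of the continued fraction of `x`:
the least `l > 0` with `a_{k+l} = a_k` for all `k ≥ 1`. -/
noncomputable def cfPeriod (x : ℝ) : ℕ :=
  sInf {l : ℕ | 0 < l ∧ ∀ k : ℕ, 1 ≤ k → cfA x (k + l) = cfA x k}

/-!
Write `s = ⌊√D⌋`. The complete quotients `α_k`, `k ≥ 1`, of `√D` are reduced surds `(P + √D) / B` with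
`A B = D - P²`. Taking the next complete quotient permutes the finite set of reduced triples
`(A, P, B)`, and the reversal `(A, P, B) ↦ (B, P, A)` conjugates this permutation to its inverse.
The orbit of `s + √D`, indexed by `ℤ`, is therefore periodic, its partial quotients satisfy
`a_{-k} = a_k`, and `a_k = 2 s` exactly when `k` is a multiple of the period `l`. Pairing `k` with
`l - k`, a value occurs an odd number of times iff it is `2 s` or it is the middle term `a_{l / 2}`.

At the middle, reversal agrees with the passage to the next quotient, so `B ∣ 2 P`. If `D = p` is
prime then `P` is coprime to `B`, so `B = 2` and `a_{l / 2} = P`; the triple being primitive, `A` and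
`P` are odd and `p = 2 A + P² ≡ 3 (mod 4)`, while reducedness gives `P ≤ s < P + 2`. Conversely, an
odd period makes some triple of the orbit its own reversal, so `p = A² + P²` and `p ≢ 3 (mod 4)`.
-/

section Involution

open Finset

theorem even_card_of_involution {α : Type*} {S : Finset α} (g : α → α)
    (mem : ∀ x ∈ S, g x ∈ S) (invol : ∀ x ∈ S, g (g x) = x) (ne : ∀ x ∈ S, g x ≠ x) :
    Even #S := by
  rw [← ZMod.natCast_eq_zero_iff_even, cast_card]
  exact sum_involution (fun x _ ↦ g x) (fun _ _ ↦ CharTwo.add_self_eq_zero 1)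
    (fun x hx _ ↦ ne x hx) mem invol

theorem odd_card_iff_odd_card_fixedPoints {α : Type*} [DecidableEq α] {S : Finset α} (g : α → α)
    (mem : ∀ x ∈ S, g x ∈ S) (invol : ∀ x ∈ S, g (g x) = x) :
    Odd #S ↔ Odd #{x ∈ S | g x = x} := by
  have heven : Even #{x ∈ S | ¬ g x = x} := by
    refine even_card_of_involution g (fun x hx ↦ ?_) (fun x hx ↦ ?_) (fun x hx ↦ ?_) <;>
      rw [mem_filter] at hx
    · rw [mem_filter, invol x hx.1]
      exact ⟨mem x hx.1, fun h ↦ hx.2 h.symm⟩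
    · exact invol x hx.1
    · exact hx.2
  rw [← card_filter_add_card_filter_not (s := S) (fun x ↦ g x = x), Nat.odd_add]
  exact iff_true_right heven

theorem odd_card_iff_of_reflection {S : Finset ℕ} {l : ℕ} (le : ∀ k ∈ S, k ≤ l)
    (mem : ∀ k ∈ S, l - k ∈ S) : Odd #S ↔ Even l ∧ l / 2 ∈ S := by
  rw [odd_card_iff_odd_card_fixedPoints (l - ·) mem fun k hk ↦ Nat.sub_sub_self (le k hk)]
  have hfixed : ∀ k ∈ S, l - k = k ↔ Even l ∧ k = l / 2 := fun k hk ↦ by grind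
  rw [filter_congr hfixed]
  by_cases h : Even l ∧ l / 2 ∈ S
  · simp [h, filter_eq']
  · rw [not_and] at h
    by_cases hl : Even l <;> simp [hl, h, filter_eq']

end Involution

theorem sq_add_sq_emod_four_ne_three (x y : ℤ) : (x ^ 2 + y ^ 2) % 4 ≠ 3 := by
  have hsq (z : ℤ) : z ^ 2 % 4 = 0 ∨ z ^ 2 % 4 = 1 := by
    rcases Int.even_or_odd z with ⟨w, rfl⟩ | hz
    · exact .inl (Int.emod_eq_zero_of_dvd ⟨w ^ 2, by ring⟩)
    · exact .inr (Int.sq_mod_four_eq_one_of_odd hz)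
  have := hsq x
  have := hsq y
  omega

section Nonsquare

variable {D : ℕ} [hD : Fact (¬ IsSquare D)]

instance {p : ℕ} [hp : Fact p.Prime] : Fact (¬ IsSquare p) := ⟨hp.out.prime.not_isSquare⟩

theorem sq_ne_of_not_isSquare (b : ℕ) : b ^ 2 ≠ D := fun h ↦ hD.out ⟨b, by rw [← h, sq]⟩

theorem natSqrt_sq_lt : D.sqrt ^ 2 < D := (Nat.sqrt_le' D).lt_of_ne (sq_ne_of_not_isSquare _)

theorem natSqrt_pos : 0 < D.sqrt := by
  have hne : 0 ≠ D := by simpa using sq_ne_of_not_isSquare (D := D) 0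
  exact Nat.sqrt_pos.2 hne.symm.pos

theorem natSqrt_lt_sqrt : (D.sqrt : ℝ) < √D :=
  Real.lt_sqrt_of_sq_lt (mod_cast natSqrt_sq_lt (D := D))

theorem le_natSqrt_lt_add_iff (b c : ℕ) :
    b ≤ D.sqrt ∧ D.sqrt < b + c ↔ b ^ 2 < D ∧ D < (b + c) ^ 2 := by
  rw [Nat.le_sqrt', Nat.sqrt_lt', (sq_ne_of_not_isSquare b).le_iff_lt]

theorem two_mul_natSqrt_eq_iff (a : ℕ) :
    2 * D.sqrt = a ↔ Even a ∧ a ^ 2 < 4 * D ∧ 4 * D < (a + 2) ^ 2 := by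
  have hhalf (b : ℕ) : D.sqrt = b ↔ (b + b) ^ 2 < 4 * D ∧ 4 * D < (b + b + 2) ^ 2 :=
    calc D.sqrt = b ↔ b ≤ D.sqrt ∧ D.sqrt < b + 1 := by omega
      _ ↔ b ^ 2 < D ∧ D < (b + 1) ^ 2 := le_natSqrt_lt_add_iff b 1
      _ ↔ (b + b) ^ 2 < 4 * D ∧ 4 * D < (b + b + 2) ^ 2 := by
        constructor <;> rintro ⟨hlower, hupper⟩ <;> constructor <;> linarith
  constructor
  · rintro rfl
    rw [two_mul]
    exact ⟨⟨_, rfl⟩, (hhalf _).1 rfl⟩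
  · rintro ⟨⟨b, rfl⟩, hbounds⟩
    rw [(hhalf b).2 hbounds, two_mul]

end Nonsquare

/-- A reduced surd `(P + √D) / B`, stored together with the denominator `A = (D - P²) / B` of its
predecessor in a continued fraction expansion; equivalently, a reduced indefinite binary quadratic
form `A x² + 2 P x y - B y²`. For `D` not a square, the inequalities on the integers `A`, `P`, `B`
say that `(P + √D) / B > 1` and `-1 < (P - √D) / B < 0`. -/
@[ext]
structure ReducedSurd (D : ℕ) where
  A : ℤ
  P : ℤ
  B : ℤ
  A_mul_B : A * B = D - P ^ 2
  P_pos : 0 < P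
  P_le : P ≤ D.sqrt
  lt_P_add_A : D.sqrt < P + A
  lt_P_add_B : D.sqrt < P + B

namespace ReducedSurd

variable {D : ℕ}

/-- The real number represented by a reduced surd. -/
noncomputable def toReal (x : ReducedSurd D) : ℝ := (x.P + √D) / x.B

/-- The partial quotient `⌊(P + √D) / B⌋` of a reduced surd, computed in integers. -/
def quot (x : ReducedSurd D) : ℤ := (x.P + D.sqrt) / x.B

/-- The reduced surd `-1 / ᾱ`, where `ᾱ` is the conjugate of the given one; it reverses continued
fraction expansions. -/
def rev (x : ReducedSurd D) : ReducedSurd D where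
  A := x.B
  P := x.P
  B := x.A
  A_mul_B := by rw [mul_comm, x.A_mul_B]
  P_pos := x.P_pos
  P_le := x.P_le
  lt_P_add_A := x.lt_P_add_B
  lt_P_add_B := x.lt_P_add_A

theorem rev_involutive : Function.Involutive (rev (D := D)) := fun _ ↦ rfl

section Bounds

variable (x : ReducedSurd D)

theorem B_pos : 0 < x.B := by linarith [x.P_le, x.lt_P_add_B]

theorem A_pos : 0 < x.A := x.rev.B_pos

theorem B_le : x.B ≤ x.P + D.sqrt := by
  by_contra! h
  have hprod : (D.sqrt + 1 - x.P) * (D.sqrt + 1 + x.P) ≤ x.A * x.B := by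
    gcongr <;> linarith [x.P_pos, x.A_pos, x.lt_P_add_A]
  have hD : (D : ℤ) < (D.sqrt + 1) ^ 2 := mod_cast Nat.lt_succ_sqrt' D
  linarith [x.A_mul_B]

theorem A_le : x.A ≤ x.P + D.sqrt := x.rev.B_le

theorem quot_mul_B_le : x.quot * x.B ≤ x.P + D.sqrt := Int.ediv_mul_le _ x.B_pos.ne'

theorem lt_quot_mul_B_add_B : x.P + D.sqrt < x.quot * x.B + x.B := by
  rw [← add_one_mul]
  exact Int.lt_ediv_add_one_mul_self _ x.B_pos

theorem B_le_quot_mul_B : x.B ≤ x.quot * x.B :=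
  le_mul_of_one_le_left x.B_pos.le <| (Int.le_ediv_iff_mul_le x.B_pos).2 <| by
    rw [one_mul]
    exact x.B_le

theorem floor_toReal : ⌊x.toReal⌋ = x.quot := by
  have hB : (0 : ℝ) < x.B := mod_cast x.B_pos
  have hlower : (x.quot * x.B : ℝ) ≤ x.P + D.sqrt := mod_cast x.quot_mul_B_le
  have hupper : (x.P + D.sqrt + 1 : ℝ) ≤ x.quot * x.B + x.B := mod_cast x.lt_quot_mul_B_add_B
  rw [toReal, Int.floor_eq_iff, le_div_iff₀ hB, div_lt_iff₀ hB, add_one_mul]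
  constructor
  · linarith [Real.nat_sqrt_le_real_sqrt (a := D)]
  · linarith [Real.real_sqrt_lt_nat_sqrt_succ (a := D)]

end Bounds

instance : Finite (ReducedSurd D) := by
  have hinj : Function.Injective fun x : ReducedSurd D ↦ (x.A, x.P, x.B) := fun x y h ↦ by
    simpa only [Prod.mk.injEq, ← ReducedSurd.ext_iff] using h
  have hbox := (Set.finite_Icc (0 : ℤ × ℤ × ℤ) (2 * D.sqrt, 2 * D.sqrt, 2 * D.sqrt)).preimage
    hinj.injOn
  refine Set.finite_univ_iff.1 (hbox.subset fun x _ ↦ ⟨⟨?_, ?_, ?_⟩, ⟨?_, ?_, ?_⟩⟩)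
  · exact x.A_pos.le
  · exact x.P_pos.le
  · exact x.B_pos.le
  all_goals dsimp only; linarith [x.A_le, x.B_le, x.P_pos, x.P_le]

section Nonsquare

variable [Fact (¬ IsSquare D)]

/-- The reduced surd following `x` in a continued fraction expansion; see `toReal_next`. -/
def next (x : ReducedSurd D) : ReducedSurd D where
  A := x.B
  P := x.quot * x.B - x.P
  B := x.A + x.quot * (2 * x.P - x.quot * x.B)
  A_mul_B := by linear_combination x.A_mul_B
  P_pos := by linarith [x.B_le_quot_mul_B, x.lt_quot_mul_B_add_B, x.P_le]
  P_le := by linarith [x.quot_mul_B_le]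
  lt_P_add_A := by linarith [x.lt_quot_mul_B_add_B]
  lt_P_add_B := by
    by_contra! h
    have hP : x.quot * x.B - x.P ≤ D.sqrt := by linarith [x.quot_mul_B_le]
    have hB : x.B ≤ D.sqrt + (x.quot * x.B - x.P) := by linarith [x.B_le_quot_mul_B, x.P_le]
    have hprod : x.B * (x.A + x.quot * (2 * x.P - x.quot * x.B)) ≤
        D.sqrt ^ 2 - (x.quot * x.B - x.P) ^ 2 :=
      calc x.B * (x.A + x.quot * (2 * x.P - x.quot * x.B))
          ≤ x.B * (D.sqrt - (x.quot * x.B - x.P)) :=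
            mul_le_mul_of_nonneg_left (by linarith) x.B_pos.le
        _ ≤ (D.sqrt + (x.quot * x.B - x.P)) * (D.sqrt - (x.quot * x.B - x.P)) := by
          gcongr
        _ = D.sqrt ^ 2 - (x.quot * x.B - x.P) ^ 2 := by ring
    have hD : (D.sqrt ^ 2 : ℤ) < D := mod_cast natSqrt_sq_lt (D := D)
    linarith [x.A_mul_B]

theorem toReal_next (x : ReducedSurd D) : x.next.toReal = 1 / (x.toReal - ⌊x.toReal⌋) := by
  have hB : (x.B : ℝ) ≠ 0 := mod_cast x.B_pos.ne'
  have hC : (x.next.B : ℝ) ≠ 0 := mod_cast x.next.B_pos.ne'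
  have hP : √D - x.next.P ≠ 0 := by
    have hle : (x.next.P : ℝ) ≤ D.sqrt := mod_cast x.next.P_le
    exact (sub_pos.2 (hle.trans_lt natSqrt_lt_sqrt)).ne'
  have hprod : (x.B * x.next.B : ℝ) = (√D - x.next.P) * (√D + x.next.P) := by
    have hsq : √D ^ 2 = (D : ℝ) := Real.sq_sqrt D.cast_nonneg
    have hnext : (x.B * x.next.B : ℝ) = D - x.next.P ^ 2 := mod_cast x.next.A_mul_B
    linear_combination hnext - hsq
  have hsub : x.toReal - x.quot = (√D - x.next.P) / x.B := by
    simp only [toReal, next]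
    push_cast
    field_simp
    ring
  rw [floor_toReal, hsub, one_div_div, toReal, div_eq_div_iff hC hP, hprod]
  ring

theorem quot_rev_next (x : ReducedSurd D) : x.next.rev.quot = x.quot := by
  have hrem : (D.sqrt - x.P) / x.B = 0 :=
    Int.ediv_eq_zero_of_lt (by linarith [x.P_le]) (by linarith [x.lt_P_add_B])
  calc (x.quot * x.B - x.P + D.sqrt) / x.B
      = (D.sqrt - x.P + x.quot * x.B) / x.B := by ring_nf
    _ = x.quot := by rw [Int.add_mul_ediv_right _ _ x.B_pos.ne', hrem, zero_add]

theorem next_rev_next (x : ReducedSurd D) : x.next.rev.next = x.rev := by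
  ext
  · rfl
  · change x.next.rev.quot * x.B - (x.quot * x.B - x.P) = x.P
    rw [quot_rev_next]
    ring
  · change x.next.B + x.next.rev.quot * (2 * x.next.P - x.next.rev.quot * x.B) = x.A
    rw [quot_rev_next]
    simp only [next]
    ring

/-- Passage to the next complete quotient, as a permutation of the reduced surds. -/
def shift (D : ℕ) [Fact (¬ IsSquare D)] : Equiv.Perm (ReducedSurd D) where
  toFun := next
  invFun x := x.rev.next.rev
  left_inv x := congrArg rev x.next_rev_next
  right_inv x := x.rev.next_rev_next

/-- The reduced surd `⌊√D⌋ + √D`; it has the same successor as `√D`. -/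
def principal (D : ℕ) [Fact (¬ IsSquare D)] : ReducedSurd D where
  A := D - D.sqrt ^ 2
  P := D.sqrt
  B := 1
  A_mul_B := mul_one _
  P_pos := mod_cast natSqrt_pos (D := D)
  P_le := le_rfl
  lt_P_add_A := by
    have hD : (D.sqrt ^ 2 : ℤ) < D := mod_cast natSqrt_sq_lt (D := D)
    linarith
  lt_P_add_B := lt_add_one _

theorem eq_principal_of_B_eq_one {x : ReducedSurd D} (hB : x.B = 1) : x = principal D := by
  have hP : x.P = D.sqrt := by linarith [x.P_le, x.lt_P_add_B]
  have hA : x.A = D - D.sqrt ^ 2 := by rw [← hP, ← x.A_mul_B, hB, mul_one]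
  exact ReducedSurd.ext hA hP hB

theorem quot_principal : (principal D).quot = 2 * D.sqrt := by
  simp [quot, principal, two_mul]

theorem eq_principal_of_quot_eq {x : ReducedSurd D} (hx : x.quot = 2 * D.sqrt) :
    x = principal D := by
  refine eq_principal_of_B_eq_one (le_antisymm ?_ x.B_pos)
  have hs : (0 : ℤ) < 2 * D.sqrt := mod_cast Nat.mul_pos two_pos (natSqrt_pos (D := D))
  refine le_of_mul_le_mul_left (a := (2 * D.sqrt : ℤ)) ?_ hs
  linarith [hx ▸ x.quot_mul_B_le, x.P_le]

theorem next_principal : (principal D).next = (principal D).rev := by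
  ext
  · rfl
  · simp only [next, rev, quot_principal]
    simp only [principal]
    ring
  · simp only [next, rev, quot_principal]
    simp only [principal]
    ring

/-- The cycle of reduced surds through `⌊√D⌋ + √D`; for `k ≥ 1` its `k`-th term is the complete
quotient `α_k` of `√D`. Extending it to all integers makes it symmetric under reversal. -/
def principalCycle (D : ℕ) [Fact (¬ IsSquare D)] (k : ℤ) : ReducedSurd D :=
  (shift D ^ k) (principal D)

theorem principalCycle_zero : principalCycle D 0 = principal D := rfl

theorem principalCycle_add_one (k : ℤ) : principalCycle D (k + 1) = (principalCycle D k).next := by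
  rw [principalCycle, add_comm, zpow_one_add]
  rfl

theorem rev_principalCycle (k : ℤ) : (principalCycle D k).rev = principalCycle D (1 - k) := by
  have hrev : SemiconjBy rev_involutive.toPerm (shift D) (shift D)⁻¹ := rfl
  calc (principalCycle D k).rev
      = ((shift D)⁻¹ ^ k) (principal D).rev := DFunLike.congr_fun (hrev.zpow_right k) (principal D)
    _ = (shift D ^ (-k)) (shift D (principal D)) := by
      rw [inv_zpow', ← next_principal]
      rfl
    _ = principalCycle D (1 - k) := by
      rw [principalCycle, sub_eq_neg_add, zpow_add_one, Equiv.Perm.mul_apply]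

theorem quot_principalCycle_neg (k : ℤ) :
    (principalCycle D (-k)).quot = (principalCycle D k).quot := by
  rw [← quot_rev_next (principalCycle D k), ← principalCycle_add_one, rev_principalCycle]
  congr 2
  ring

theorem cfAlpha_sqrt {k : ℕ} (hk : 1 ≤ k) : cfAlpha √D k = (principalCycle D k).toReal := by
  induction k, hk using Nat.le_induction with
  | base =>
    have hfloor : (principal D).toReal - ⌊(principal D).toReal⌋ = √D - ⌊√(D : ℝ)⌋ := by
      rw [floor_toReal, quot_principal, Real.floor_real_sqrt_eq_nat_sqrt]
      simp only [toReal, principal]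
      push_cast
      ring
    rw [Nat.cast_one, ← zero_add (1 : ℤ), principalCycle_add_one, toReal_next,
      principalCycle_zero, hfloor]
    rfl
  | succ k _ ih =>
    rw [Nat.cast_add_one, principalCycle_add_one, toReal_next, ← ih]
    rfl

theorem cfA_sqrt {k : ℕ} (hk : 1 ≤ k) : cfA √D k = (principalCycle D k).quot := by
  rw [cfA, cfAlpha_sqrt hk, floor_toReal]

theorem principalCycle_eq_iff_minimalPeriod_dvd {i j : ℤ} :
    principalCycle D i = principalCycle D j ↔
      (Function.minimalPeriod (shift D) (principal D) : ℤ) ∣ i - j := by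
  rw [← add_sub_cancel j i, principalCycle, zpow_add, Equiv.Perm.mul_apply, principalCycle,
    EmbeddingLike.apply_eq_iff_eq, add_sub_cancel]
  exact MulAction.zpow_smul_eq_iff_minimalPeriod_dvd (a := shift D)

theorem minimalPeriod_shift_pos : 0 < Function.minimalPeriod (shift D) (principal D) :=
  Function.minimalPeriod_pos_of_mem_periodicPts ((shift D).injective.mem_periodicPts _)

theorem cfPeriod_sqrt : cfPeriod √D = Function.minimalPeriod (shift D) (principal D) := by
  set l := Function.minimalPeriod (shift D) (principal D)
  have hpos : 0 < l := minimalPeriod_shift_pos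
  have hadd (k : ℕ) : principalCycle D (k + l : ℕ) = principalCycle D k :=
    principalCycle_eq_iff_minimalPeriod_dvd.2 ⟨1, by push_cast; ring⟩
  have hcycle : principalCycle D l = principal D := by simpa [principalCycle_zero] using hadd 0
  refine IsLeast.csInf_eq ⟨⟨hpos, fun k hk ↦ ?_⟩, fun m ⟨hm, hperiod⟩ ↦ ?_⟩
  · rw [cfA_sqrt (by omega), cfA_sqrt hk, hadd]
  · have hquot : (principalCycle D (l + m : ℕ)).quot = 2 * D.sqrt := by
      rw [← cfA_sqrt (by omega), hperiod l hpos, cfA_sqrt hpos, hcycle, quot_principal]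
    have hdvd : (l : ℤ) ∣ (l + m : ℕ) - 0 :=
      principalCycle_eq_iff_minimalPeriod_dvd.1 (eq_principal_of_quot_eq hquot)
    rw [sub_zero, Int.natCast_dvd_natCast, Nat.dvd_add_right dvd_rfl] at hdvd
    exact Nat.le_of_dvd hm hdvd

theorem cfPeriod_sqrt_pos : 0 < cfPeriod √D := by
  rw [cfPeriod_sqrt]
  exact minimalPeriod_shift_pos

theorem principalCycle_eq_iff {i j : ℤ} :
    principalCycle D i = principalCycle D j ↔ (cfPeriod √D : ℤ) ∣ i - j := by
  rw [cfPeriod_sqrt, principalCycle_eq_iff_minimalPeriod_dvd]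

theorem cfA_sqrt_eq_two_mul_sqrt_iff {k : ℕ} (hk : 1 ≤ k) :
    cfA √D k = 2 * D.sqrt ↔ cfPeriod √D ∣ k := by
  have hprincipal : principalCycle D k = principal D ↔ cfPeriod √D ∣ k := by
    rw [← principalCycle_zero, principalCycle_eq_iff, sub_zero, Int.natCast_dvd_natCast]
  rw [cfA_sqrt hk, ← hprincipal]
  exact ⟨eq_principal_of_quot_eq, fun h ↦ h ▸ quot_principal⟩

theorem cfA_sqrt_period_sub {k : ℕ} (hk : 1 ≤ k) (hlt : k < cfPeriod √D) :
    cfA √D (cfPeriod √D - k) = cfA √D k := by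
  have hcycle : principalCycle D (cfPeriod √D - k : ℕ) = principalCycle D (-k) := by
    rw [principalCycle_eq_iff, Nat.cast_sub hlt.le]
    simp
  rw [cfA_sqrt (by omega), hcycle, quot_principalCycle_neg, cfA_sqrt hk]

open Finset in
theorem odd_card_filter_cfA_sqrt_iff (a : ℤ) :
    Odd #{k ∈ Icc 1 (cfPeriod √D) | cfA √D k = a} ↔
      2 * D.sqrt = a ∨ Even (cfPeriod √D) ∧ cfA √D (cfPeriod √D / 2) = a := by
  have hpos := cfPeriod_sqrt_pos (D := D)
  rcases eq_or_ne (2 * D.sqrt : ℤ) a with rfl | ha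
  · have hlast : {k ∈ Icc 1 (cfPeriod √D) | cfA √D k = 2 * D.sqrt} = {cfPeriod √D} := by
      ext k
      simp only [mem_filter, mem_Icc, mem_singleton]
      constructor
      · rintro ⟨⟨hk, hle⟩, h⟩
        exact hle.antisymm (Nat.le_of_dvd hk ((cfA_sqrt_eq_two_mul_sqrt_iff hk).1 h))
      · rintro rfl
        exact ⟨⟨hpos, le_rfl⟩, (cfA_sqrt_eq_two_mul_sqrt_iff hpos).2 dvd_rfl⟩
    simp [hlast]
  · have hlast : cfA √D (cfPeriod √D) ≠ a := by
      rwa [(cfA_sqrt_eq_two_mul_sqrt_iff hpos).2 dvd_rfl]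
    rw [odd_card_iff_of_reflection (l := cfPeriod √D)]
    · simp only [ha, false_or, mem_filter, mem_Icc]
      grind
    · simp only [mem_filter, mem_Icc]
      exact fun k hk ↦ hk.1.2
    · simp only [mem_filter, mem_Icc]
      rintro k ⟨⟨hk, hle⟩, hka⟩
      have hlt : k < cfPeriod √D := hle.lt_of_ne (by rintro rfl; exact hlast hka)
      exact ⟨⟨by omega, by omega⟩, (cfA_sqrt_period_sub hk hlt).trans hka⟩

theorem even_cfPeriod_sqrt (hmod : D % 4 = 3) : Even (cfPeriod √D) := by
  by_contra hodd
  obtain ⟨h, hl⟩ := Nat.not_even_iff_odd.1 hodd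
  let x := principalCycle D (h + 1)
  have hrev : x.rev = x := by
    rw [rev_principalCycle, principalCycle_eq_iff, hl]
    exact ⟨-1, by push_cast; ring⟩
  have hAB : x.B = x.A := congrArg A hrev
  have hsum : (D : ℤ) = x.A ^ 2 + x.P ^ 2 := by linear_combination -x.A_mul_B + x.A * hAB
  have := sq_add_sq_emod_four_ne_three x.A x.P
  omega

/-- Primitivity of the binary quadratic form `A x² + 2 P x y - B y²` attached to a reduced surd. -/
def IsPrimitive (x : ReducedSurd D) : Prop :=
  ∀ d, d ∣ x.A → d ∣ 2 * x.P → d ∣ x.B → IsUnit d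

theorem IsPrimitive.next {x : ReducedSurd D} (hx : x.IsPrimitive) : x.next.IsPrimitive := by
  intro d hA hP hB
  have hAx : x.A = x.next.B + x.quot * (2 * x.next.P - x.quot * x.next.A) := by
    simp only [ReducedSurd.next]
    ring
  have hPx : 2 * x.P = 2 * (x.quot * x.next.A) - 2 * x.next.P := by
    simp only [ReducedSurd.next]
    ring
  refine hx d ?_ ?_ hA
  · rw [hAx]
    exact dvd_add hB ((dvd_sub hP (hA.mul_left _)).mul_left _)
  · rw [hPx]
    exact dvd_sub ((hA.mul_left _).mul_left _) hP

theorem isPrimitive_principalCycle (k : ℕ) : (principalCycle D k).IsPrimitive := by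
  induction k with
  | zero => exact fun d _ _ hB ↦ isUnit_of_dvd_one hB
  | succ k ih =>
    rw [Nat.cast_add_one, principalCycle_add_one]
    exact ih.next

end Nonsquare

section Prime

variable {p : ℕ} [hp : Fact p.Prime]

theorem isCoprime_P_B (x : ReducedSurd p) : IsCoprime x.P x.B := by
  have hPp : x.P < p := x.P_le.trans_lt (mod_cast Nat.sqrt_lt_self hp.out.one_lt)
  have hndvd : ¬ (p : ℤ) ∣ x.P := fun hdvd ↦ (Int.le_of_dvd x.P_pos hdvd).not_gt hPp
  have hcop : IsCoprime x.P (p : ℤ) :=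
    ((Nat.prime_iff_prime_int.1 hp.out).irreducible.coprime_iff_not_dvd.2 hndvd).symm
  have hsum : (p : ℤ) = x.A * x.B + x.P * x.P := by linear_combination -x.A_mul_B
  rw [hsum] at hcop
  exact hcop.of_add_mul_left_right.of_mul_right_right

theorem B_eq_two_of_rev_eq_next {x : ReducedSurd p} (hx : x.rev = x.next) (hne : x.B ≠ 1) :
    x.B = 2 := by
  have hP : x.P = x.quot * x.B - x.P := congrArg P hx
  have hdvd : x.B ∣ 2 := x.isCoprime_P_B.symm.dvd_of_dvd_mul_right
    ⟨x.quot, by linear_combination hP⟩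
  have := Int.le_of_dvd two_pos hdvd
  have := x.B_pos
  omega

theorem quot_of_rev_eq_next {x : ReducedSurd p} (hx : x.rev = x.next) (hprim : x.IsPrimitive)
    (hne : x.B ≠ 1) :
    p % 4 = 3 ∧ Odd x.quot ∧ x.quot ≤ p.sqrt ∧ p.sqrt < x.quot + 2 := by
  have hB : x.B = 2 := B_eq_two_of_rev_eq_next hx hne
  have hquot : x.quot = x.P := by
    have hP : x.P = x.quot * x.B - x.P := congrArg P hx
    rw [hB] at hP
    linarith
  have hPodd : Odd x.P := Int.isCoprime_two_right.1 (hB ▸ x.isCoprime_P_B)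
  have hAodd : Odd x.A := by
    rw [← Int.not_even_iff_odd, even_iff_two_dvd]
    intro hA
    exact Int.prime_two.not_isUnit (hprim 2 hA (dvd_mul_right 2 x.P) hB.symm.dvd)
  rw [hquot]
  refine ⟨?_, hPodd, x.P_le, hB ▸ x.lt_P_add_B⟩
  have hsum : (p : ℤ) = x.A * 2 + x.P ^ 2 := by linear_combination -x.A_mul_B + x.A * hB
  have hPsq := Int.sq_mod_four_eq_one_of_odd hPodd
  obtain ⟨c, hc⟩ := hAodd
  omega

theorem cfA_sqrt_half_period (heven : Even (cfPeriod √p)) :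
    p % 4 = 3 ∧ Odd (cfA √p (cfPeriod √p / 2)) ∧
      cfA √p (cfPeriod √p / 2) ≤ p.sqrt ∧ p.sqrt < cfA √p (cfPeriod √p / 2) + 2 := by
  have hpos := cfPeriod_sqrt_pos (D := p)
  obtain ⟨h, hl⟩ := heven
  rw [hl, ← two_mul, Nat.mul_div_cancel_left h two_pos, cfA_sqrt (by omega)]
  refine quot_of_rev_eq_next ?_ (isPrimitive_principalCycle h) fun hB ↦ ?_
  · rw [rev_principalCycle, ← principalCycle_add_one, principalCycle_eq_iff, hl]
    exact ⟨-1, by push_cast; ring⟩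
  · have hdvd : (cfPeriod √p : ℤ) ∣ h - 0 :=
      principalCycle_eq_iff.1 (eq_principal_of_B_eq_one hB)
    rw [sub_zero, Int.natCast_dvd_natCast] at hdvd
    have := Nat.le_of_dvd (by omega) hdvd
    omega

end Prime

end ReducedSurd

theorem stmt_0 (a p : ℕ) (ha : 0 < a) (hp : p.Prime) :
    Odd ((Finset.Icc 1 (cfPeriod (Real.sqrt p))).filter
        (fun k => cfA (Real.sqrt p) k = (a : ℤ))).card ↔
      ((Odd a ∧ p % 4 = 3 ∧ a ^ 2 < p ∧ p < (a + 2) ^ 2) ∨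
        (Even a ∧ a ^ 2 < 4 * p ∧ 4 * p < (a + 2) ^ 2)) := by
  have : Fact p.Prime := ⟨hp⟩
  rw [ReducedSurd.odd_card_filter_cfA_sqrt_iff, or_comm]
  refine or_congr ?_ (mod_cast two_mul_natSqrt_eq_iff a)
  rw [← le_natSqrt_lt_add_iff]
  constructor
  · rintro ⟨heven, hmid⟩
    obtain ⟨hmod, hodd, hle, hlt⟩ := hmid ▸ ReducedSurd.cfA_sqrt_half_period heven
    exact ⟨mod_cast hodd, hmod, mod_cast hle, mod_cast hlt⟩
  · rintro ⟨hodd, hmod, hle, hlt⟩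
    have heven := ReducedSurd.even_cfPeriod_sqrt hmod
    obtain ⟨-, hmid_odd, hmid_le, hmid_lt⟩ := ReducedSurd.cfA_sqrt_half_period heven
    refine ⟨heven, ?_⟩
    grind
end

section
/- Let p be a prime number and let D = p or D = 2p, with D not a perfect square. If T_D = 2L for some positive integer L, then Q_L = 2. -/
/-- The integer sequences `(Pₖ, Qₖ)` attached to the continued fraction of `√D`:
`P₀ = 0`, `Q₀ = 1`, `P_{k+1} = aₖ·Qₖ − Pₖ`, `Q_{k+1} = (D − P_{k+1}²)/Qₖ`. -/
noncomputable def cfPQ (D : ℕ) : ℕ → ℤ × ℤ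
  | 0 => (0, 1)
  | k + 1 =>
    ((cfA (Real.sqrt D) k) * (cfPQ D k).2 - (cfPQ D k).1,
      ((D : ℤ) - ((cfA (Real.sqrt D) k) * (cfPQ D k).2 - (cfPQ D k).1) ^ 2) / (cfPQ D k).2)

/-!
Every complete quotient of `√D` is `α_k = (√D + P_k) / Q_k`, where
`Q_k * Q_{k+1} = D - P_{k+1}²` and `P_{k+1}` is the only integer in the window
`(√D - Q_k, √D)` that is congruent to `-P_k` modulo `Q_k`. For `k ≥ 1`, `P_k` also lies in
`(√D - Q_k, √D)`, so that the recursion can be run backwards by the same rule. Hence `Q_n = 1`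
forces `(P_k, Q_k)` to be palindromic on `[0, n]`. A continued fraction determines its value, so the
minimal period is the least `n > 0` with `Q_n = 1`.

For `n = 2 * L` the palindrome has a midpoint: `P_{L+1} = P_L`, so `Q_L` divides both `2 * P_L` and
`D - P_L²`, while `Q_L ≠ 1` by minimality. As `0 < P_L < √D` and `D ∣ 2 * p`, the prime `p` does not
divide `P_L`; therefore `Q_L ∣ 4`, and `4` is excluded by parity.
-/

theorem cfAlpha_succ (x : ℝ) (k : ℕ) : cfAlpha x (k + 1) = (Int.fract (cfAlpha x k))⁻¹ :=
  one_div _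

theorem cfAlpha_add (x : ℝ) (m n : ℕ) : cfAlpha x (m + n) = cfAlpha (cfAlpha x m) n := by
  induction n with
  | zero => rfl
  | succ n ih => rw [← add_assoc, cfAlpha_succ, cfAlpha_succ, ih]

theorem cfA_add (x : ℝ) (m n : ℕ) : cfA x (m + n) = cfA (cfAlpha x m) n :=
  congrArg Int.floor (cfAlpha_add x m n)

theorem convs_eq_of_cfA_eq (n : ℕ) {x y : ℝ} (h : cfA x = cfA y) :
    (GenContFract.of x).convs n = (GenContFract.of y).convs n := by
  have floor_eq : ⌊x⌋ = ⌊y⌋ := congrFun h 0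
  induction n generalizing x y with
  | zero => simp [floor_eq]
  | succ n ih =>
    have tail_eq : cfA (cfAlpha x 1) = cfA (cfAlpha y 1) := by
      funext k
      rw [← cfA_add, ← cfA_add, h]
    have fract_eq := ih tail_eq (congrFun tail_eq 0)
    rw [cfAlpha_succ, cfAlpha_succ] at fract_eq
    rw [GenContFract.convs_succ, GenContFract.convs_succ, floor_eq]
    exact congrArg (fun t : ℝ => ⌊y⌋ + 1 / t) fract_eq

theorem cfA_injective : Function.Injective cfA := fun x y h =>
  tendsto_nhds_unique (GenContFract.of_convergence x)
    ((GenContFract.of_convergence y).congr fun n => (convs_eq_of_cfA_eq n h).symm)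

theorem forall_cfA_add_eq_iff (x : ℝ) (l : ℕ) :
    (∀ k, 1 ≤ k → cfA x (k + l) = cfA x k) ↔ cfAlpha x (l + 1) = cfAlpha x 1 := by
  constructor
  · intro h
    refine cfA_injective (funext fun k => ?_)
    rw [← cfA_add, ← cfA_add, ← h (1 + k) (by omega)]
    congr 1
    omega
  · intro h k hk
    obtain ⟨j, rfl⟩ := Nat.exists_eq_add_of_le hk
    rw [show 1 + j + l = l + 1 + j by omega, cfA_add, h, ← cfA_add]

/-- The integer `P_k` in the representation `α_k = (√D + P_k) / Q_k` of the `k`-th complete quotient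
of `√D`. -/
noncomputable def cfP (D k : ℕ) : ℤ := (cfPQ D k).1

/-- The integer `Q_k` in the representation `α_k = (√D + P_k) / Q_k` of the `k`-th complete quotient
of `√D`. -/
noncomputable def cfQ (D k : ℕ) : ℤ := (cfPQ D k).2

theorem cfP_zero (D : ℕ) : cfP D 0 = 0 := rfl

theorem cfQ_zero (D : ℕ) : cfQ D 0 = 1 := rfl

theorem cfP_succ (D k : ℕ) : cfP D (k + 1) = cfA √D k * cfQ D k - cfP D k := rfl

theorem cfQ_succ (D k : ℕ) : cfQ D (k + 1) = (D - cfP D (k + 1) ^ 2) / cfQ D k := rfl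

/-- `α = (√D + P) / Q` satisfies the conditions that the continued fraction algorithm preserves:
it exceeds `1`, its conjugate `(P - √D) / Q` is negative, and `Q` divides `D - P ^ 2`, so that the
recursion for `P` and `Q` stays within the integers. The formula for `α` is stated without
division. -/
structure IsCompleteQuotient (D : ℕ) (α : ℝ) (P Q : ℤ) : Prop where
  mul_eq : α * Q = √D + P
  pos : 0 < Q
  dvd : Q ∣ D - P ^ 2
  lt_sqrt : P < √D
  one_lt : 1 < α

namespace IsCompleteQuotient

variable {D : ℕ} {α : ℝ} {P Q P' Q' : ℤ}

theorem irrational (h : IsCompleteQuotient D α P Q) (hD : ¬IsSquare D) : Irrational α := by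
  have hmul : Irrational (α * Q) := by
    rw [h.mul_eq]
    exact (irrational_sqrt_natCast_iff.mpr hD).add_intCast P
  exact (irrational_mul_intCast_iff.mp hmul).2

theorem unique (h : IsCompleteQuotient D α P Q) (h' : IsCompleteQuotient D α P' Q')
    (hD : ¬IsSquare D) : P = P' ∧ Q = Q' := by
  have hsub : α * (Q - Q' : ℤ) = (P - P' : ℤ) := by
    push_cast
    linear_combination h.mul_eq - h'.mul_eq
  have hQ : Q - Q' = 0 := by
    by_contra hne
    exact ((h.irrational hD).mul_intCast hne).ne_int _ hsub
  have hP : P - P' = 0 := by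
    rw [hQ, Int.cast_zero, mul_zero] at hsub
    exact_mod_cast hsub.symm
  exact ⟨sub_eq_zero.mp hP, sub_eq_zero.mp hQ⟩

theorem fract_pos (h : IsCompleteQuotient D α P Q) (hD : ¬IsSquare D) : 0 < Int.fract α :=
  sub_pos.mpr ((Int.floor_le α).lt_of_ne ((h.irrational hD).ne_int _).symm)

theorem fract_mul (h : IsCompleteQuotient D α P Q) (hP' : P' = ⌊α⌋ * Q - P) :
    Int.fract α * Q = √D - P' := by
  rw [hP', Int.fract]
  push_cast
  linear_combination h.mul_eq

theorem next_lt_sqrt (h : IsCompleteQuotient D α P Q) (hD : ¬IsSquare D)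
    (hP' : P' = ⌊α⌋ * Q - P) : P' < √D := by
  have : 0 < Int.fract α * Q := mul_pos (h.fract_pos hD) (Int.cast_pos.mpr h.pos)
  linarith [h.fract_mul hP']

theorem sqrt_sub_lt_next (h : IsCompleteQuotient D α P Q) (hP' : P' = ⌊α⌋ * Q - P) :
    √D - Q < P' := by
  have : Int.fract α * Q < 1 * Q :=
    mul_lt_mul_of_pos_right (Int.fract_lt_one α) (Int.cast_pos.mpr h.pos)
  linarith [h.fract_mul hP']

theorem lt_sqrt_add_next (h : IsCompleteQuotient D α P Q) (hP' : P' = ⌊α⌋ * Q - P) :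
    Q < √D + P' := by
  have hfloor : 1 ≤ ⌊α⌋ := Int.le_floor.mpr (by exact_mod_cast h.one_lt.le)
  have hle : Q - P ≤ P' := by nlinarith [h.pos]
  have hle' : (Q - P : ℝ) ≤ P' := by exact_mod_cast hle
  linarith [h.lt_sqrt]

theorem dvd_next (h : IsCompleteQuotient D α P Q) (hP' : P' = ⌊α⌋ * Q - P) :
    Q ∣ D - P' ^ 2 := by
  have hsub : D - P' ^ 2 = D - P ^ 2 + Q * (2 * ⌊α⌋ * P - ⌊α⌋ ^ 2 * Q) := by rw [hP']; ring
  exact hsub ▸ dvd_add h.dvd (dvd_mul_right _ _)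

theorem mul_next (h : IsCompleteQuotient D α P Q) (hP' : P' = ⌊α⌋ * Q - P)
    (hQ' : Q' = (D - P' ^ 2) / Q) : Q * Q' = D - P' ^ 2 :=
  hQ' ▸ Int.mul_ediv_cancel' (h.dvd_next hP')

theorem cast_mul_next (h : IsCompleteQuotient D α P Q) (hP' : P' = ⌊α⌋ * Q - P)
    (hQ' : Q' = (D - P' ^ 2) / Q) : (Q * Q' : ℝ) = (√D - P') * (√D + P') := by
  have hcast : (Q * Q' : ℝ) = D - P' ^ 2 := by exact_mod_cast h.mul_next hP' hQ'
  linear_combination hcast - Real.sq_sqrt (Nat.cast_nonneg (α := ℝ) D)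

theorem next (h : IsCompleteQuotient D α P Q) (hD : ¬IsSquare D) (hP' : P' = ⌊α⌋ * Q - P)
    (hQ' : Q' = (D - P' ^ 2) / Q) : IsCompleteQuotient D (Int.fract α)⁻¹ P' Q' := by
  have hQ : (0 : ℝ) < Q := Int.cast_pos.mpr h.pos
  have hfract : Int.fract α * (√D + P') = Q' := by
    refine mul_left_cancel₀ hQ.ne' ?_
    linear_combination (√D + P') * h.fract_mul hP' - h.cast_mul_next hP' hQ'
  have hpos : (0 : ℝ) < Q' := by
    rw [← hfract]
    exact mul_pos (h.fract_pos hD) (hQ.trans (h.lt_sqrt_add_next hP'))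
  exact
    { mul_eq := by rw [← hfract, inv_mul_cancel_left₀ (h.fract_pos hD).ne']
      pos := Int.cast_pos.mp hpos
      dvd := ⟨Q, by rw [← h.mul_next hP' hQ', mul_comm]⟩
      lt_sqrt := h.next_lt_sqrt hD hP'
      one_lt := (one_lt_inv₀ (h.fract_pos hD)).mpr (Int.fract_lt_one α) }

end IsCompleteQuotient

section SqrtExpansion

variable {D : ℕ} (hD : ¬IsSquare D)
include hD

theorem isCompleteQuotient_cfAlpha (k : ℕ) :
    IsCompleteQuotient D (cfAlpha √D k) (cfP D k) (cfQ D k) := by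
  induction k with
  | zero =>
    have hD1 : 1 < D := by
      by_contra! hle
      interval_cases D <;> simp at hD
    have hsqrt : 1 < √(D : ℝ) := Real.lt_sqrt_of_sq_lt (by exact_mod_cast hD1)
    constructor <;> simp [cfAlpha, cfP_zero, cfQ_zero, hsqrt, zero_lt_one.trans hsqrt]
  | succ k ih =>
    rw [cfAlpha_succ]
    exact ih.next hD (cfP_succ D k) (cfQ_succ D k)

theorem cfQ_pos (k : ℕ) : 0 < cfQ D k := (isCompleteQuotient_cfAlpha hD k).pos

theorem cfP_lt_sqrt (k : ℕ) : cfP D k < √D := (isCompleteQuotient_cfAlpha hD k).lt_sqrt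

theorem cfQ_mul_cfQ_succ (k : ℕ) : cfQ D k * cfQ D (k + 1) = D - cfP D (k + 1) ^ 2 :=
  (isCompleteQuotient_cfAlpha hD k).mul_next (cfP_succ D k) (cfQ_succ D k)

theorem sqrt_sub_cfQ_lt_cfP_succ (k : ℕ) : √D - cfQ D k < cfP D (k + 1) :=
  (isCompleteQuotient_cfAlpha hD k).sqrt_sub_lt_next (cfP_succ D k)

theorem cfQ_lt_sqrt_add_cfP_succ (k : ℕ) : cfQ D k < √D + cfP D (k + 1) :=
  (isCompleteQuotient_cfAlpha hD k).lt_sqrt_add_next (cfP_succ D k)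

theorem cfP_succ_pos (k : ℕ) : 0 < cfP D (k + 1) := by
  have : (0 : ℝ) < cfP D (k + 1) := by
    linarith [sqrt_sub_cfQ_lt_cfP_succ hD k, cfQ_lt_sqrt_add_cfP_succ hD k]
  exact_mod_cast this

theorem cfP_succ_sq_lt (k : ℕ) : cfP D (k + 1) ^ 2 < D := by
  linarith [cfQ_mul_cfQ_succ hD k, mul_pos (cfQ_pos hD k) (cfQ_pos hD (k + 1))]

theorem sqrt_sub_cfQ_succ_lt_cfP_succ (k : ℕ) : √D - cfQ D (k + 1) < cfP D (k + 1) := by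
  have hQ : (0 : ℝ) < cfQ D (k + 1) := Int.cast_pos.mpr (cfQ_pos hD _)
  have hlt := cfQ_lt_sqrt_add_cfP_succ hD k
  have hpos : 0 < √D + cfP D (k + 1) := (Int.cast_pos.mpr (cfQ_pos hD k)).trans hlt
  rw [sub_lt_comm]
  refine lt_of_mul_lt_mul_right ?_ hpos.le
  calc (√D - cfP D (k + 1)) * (√D + cfP D (k + 1)) = cfQ D k * cfQ D (k + 1) :=
        ((isCompleteQuotient_cfAlpha hD k).cast_mul_next (cfP_succ D k) (cfQ_succ D k)).symm
    _ < cfQ D (k + 1) * (√D + cfP D (k + 1)) := by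
        rw [mul_comm]
        exact mul_lt_mul_of_pos_left hlt hQ

theorem eq_cfP_succ {k : ℕ} {x : ℤ} (hlt : x < √D) (hgt : √D - cfQ D k < x)
    (hdvd : cfQ D k ∣ x + cfP D k) : x = cfP D (k + 1) := by
  have hdvd_sub : cfQ D k ∣ x - cfP D (k + 1) := by
    have := hdvd.sub (dvd_mul_left (cfQ D k) (cfA √D k))
    rwa [show x + cfP D k - cfA √D k * cfQ D k = x - cfP D (k + 1) by rw [cfP_succ]; ring] at this
  have habs : |((x - cfP D (k + 1) : ℤ) : ℝ)| < cfQ D k := by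
    push_cast
    rw [abs_lt]
    constructor <;> linarith [cfP_lt_sqrt hD (k + 1), sqrt_sub_cfQ_lt_cfP_succ hD k]
  exact sub_eq_zero.mp (Int.eq_zero_of_abs_lt_dvd hdvd_sub (by exact_mod_cast habs))

theorem cfAlpha_succ_eq_cfAlpha_one_iff (n : ℕ) :
    cfAlpha √D (n + 1) = cfAlpha √D 1 ↔ cfQ D n = 1 := by
  have hfirst : cfQ D 1 = D - cfP D 1 ^ 2 := by
    rw [← cfQ_mul_cfQ_succ hD 0, cfQ_zero, one_mul]
  constructor
  · intro h
    have hn := isCompleteQuotient_cfAlpha hD (n + 1)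
    rw [h] at hn
    obtain ⟨hP, hQ⟩ := hn.unique (isCompleteQuotient_cfAlpha hD 1) hD
    refine mul_right_cancel₀ (cfQ_pos hD 1).ne' ?_
    rw [one_mul, ← hQ, cfQ_mul_cfQ_succ hD n, hP, hQ, hfirst]
  · intro h
    have hP : cfP D (n + 1) = cfP D 1 :=
      eq_cfP_succ hD (cfP_lt_sqrt hD _) (by simpa [h, cfQ_zero] using sqrt_sub_cfQ_lt_cfP_succ hD n)
        (one_dvd _)
    have hQ : cfQ D (n + 1) = cfQ D 1 := by
      rw [hfirst, ← hP, ← cfQ_mul_cfQ_succ hD n, h, one_mul]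
    have hn := isCompleteQuotient_cfAlpha hD (n + 1)
    rw [hP, hQ] at hn
    exact mul_right_cancel₀ (Int.cast_ne_zero.mpr (cfQ_pos hD 1).ne')
      (hn.mul_eq.trans (isCompleteQuotient_cfAlpha hD 1).mul_eq.symm)

theorem cfPeriod_sqrt_eq_sInf : cfPeriod √D = sInf {n | 0 < n ∧ cfQ D n = 1} := by
  simp only [cfPeriod, forall_cfA_add_eq_iff, cfAlpha_succ_eq_cfAlpha_one_iff hD]

theorem cfQ_cfP_palindrome {i j : ℕ} (h : cfQ D (i + j + 1) = 1) :
    cfQ D i = cfQ D (j + 1) ∧ cfP D (i + 1) = cfP D (j + 1) := by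
  induction i generalizing j with
  | zero =>
    rw [zero_add] at h
    refine ⟨h.symm, (eq_cfP_succ hD (cfP_lt_sqrt hD _) ?_ (one_dvd _)).symm⟩
    simpa [h, cfQ_zero] using sqrt_sub_cfQ_succ_lt_cfP_succ hD j
  | succ i ih =>
    obtain ⟨ihQ, ihP⟩ := ih (j := j + 1) (by rwa [show i + (j + 1) + 1 = i + 1 + j + 1 by omega])
    have hQ : cfQ D (i + 1) = cfQ D (j + 1) := by
      refine mul_left_cancel₀ (cfQ_pos hD i).ne' ?_
      rw [cfQ_mul_cfQ_succ hD i, ihP, ← cfQ_mul_cfQ_succ hD (j + 1), ihQ, mul_comm]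
    refine ⟨hQ, (eq_cfP_succ hD (cfP_lt_sqrt hD _) ?_ ?_).symm⟩
    · rw [hQ]
      exact sqrt_sub_cfQ_succ_lt_cfP_succ hD j
    · rw [hQ, ihP, cfP_succ D (j + 1), add_sub_cancel]
      exact dvd_mul_left _ _

theorem cfQ_dvd_two_mul_cfP {k : ℕ} (h : cfQ D (2 * (k + 1)) = 1) :
    cfQ D (k + 1) ∣ 2 * cfP D (k + 1) := by
  have hsplit : cfQ D (k + 1 + k + 1) = 1 := by rwa [show k + 1 + k + 1 = 2 * (k + 1) by ring]
  have hmid : cfP D (k + 2) = cfP D (k + 1) := (cfQ_cfP_palindrome hD hsplit).2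
  exact ⟨cfA √D (k + 1), by linear_combination cfP_succ D (k + 1) - hmid⟩

end SqrtExpansion

theorem isCoprime_of_sq_lt_two_mul {p : ℕ} (hp : p.Prime) {P : ℤ} (hP : P ≠ 0)
    (hlt : P ^ 2 < 2 * p) : IsCoprime P p := by
  refine ((Prime.coprime_iff_not_dvd (Nat.prime_iff_prime_int.mp hp)).mpr fun hdvd => ?_).symm
  have hsq : (p : ℤ) ^ 2 ≤ P ^ 2 := Int.le_of_dvd (by positivity) (pow_dvd_pow_of_dvd hdvd 2)
  have htwo : (2 : ℤ) ≤ p := by exact_mod_cast hp.two_le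
  nlinarith

theorem dvd_four_of_isCoprime {d p P Q : ℤ} (hcop : IsCoprime P p) (hd : d ∣ 2 * p)
    (hdvd : Q ∣ 2 * P) (hdvd_sub : Q ∣ d - P ^ 2) : Q ∣ 4 := by
  have hP : Q ∣ 4 * P := hdvd.trans ⟨2, by ring⟩
  have hdiscr : Q ∣ 2 * d := by
    rw [show 2 * d = 2 * (d - P ^ 2) + 2 * P * P by ring]
    exact dvd_add (hdvd_sub.mul_left 2) (hdvd.mul_right P)
  have hp : Q ∣ 4 * p := hdiscr.trans ((mul_dvd_mul_left 2 hd).trans ⟨1, by ring⟩)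
  obtain ⟨u, v, huv⟩ := hcop
  rw [show (4 : ℤ) = 4 * P * u + 4 * p * v by linear_combination -4 * huv]
  exact dvd_add (hP.mul_right u) (hp.mul_right v)

theorem not_four_dvd_of_isCoprime {d p P : ℤ} (hcop : IsCoprime P p) (hd : d ∣ 2 * p)
    (hdvd : 4 ∣ 2 * P) : ¬4 ∣ d - P ^ 2 := by
  intro hdvd_sub
  obtain ⟨t, rfl⟩ : 2 ∣ P := by omega
  have hfour : 4 ∣ d := by
    have := dvd_add hdvd_sub (Dvd.intro (t ^ 2) rfl)
    rwa [show d - (2 * t) ^ 2 + 4 * t ^ 2 = d by ring] at this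
  have htwo : 2 ∣ p := by
    have := hfour.trans hd
    omega
  exact Int.prime_two.not_isUnit (hcop.isUnit_of_dvd' (dvd_mul_right 2 t) htwo)

theorem eq_two_of_isCoprime {d p P Q : ℤ} (hcop : IsCoprime P p) (hd : d ∣ 2 * p) (hQ : 0 ≤ Q)
    (hne : Q ≠ 1) (hdvd : Q ∣ 2 * P) (hdvd_sub : Q ∣ d - P ^ 2) : Q = 2 := by
  have hfour : Q ∣ 4 := dvd_four_of_isCoprime hcop hd hdvd hdvd_sub
  have hne_four : Q ≠ 4 := by
    rintro rfl
    exact not_four_dvd_of_isCoprime hcop hd hdvd hdvd_sub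
  have hle : Q ≤ 4 := Int.le_of_dvd (by norm_num) hfour
  interval_cases Q <;> omega

theorem stmt_4 (p D : ℕ) (hp : p.Prime) (hD : D = p ∨ D = 2 * p)
    (hns : ¬ IsSquare D) (L : ℕ) (hL : 0 < L)
    (hT : cfPeriod (Real.sqrt D) = 2 * L) :
    (cfPQ D L).2 = 2 := by
  rw [cfPeriod_sqrt_eq_sInf hns] at hT
  obtain ⟨-, hQ_period⟩ : 2 * L ∈ {n | 0 < n ∧ cfQ D n = 1} :=
    hT ▸ Nat.sInf_mem (Nat.nonempty_of_pos_sInf (by omega))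
  have hQ_ne_one : cfQ D L ≠ 1 := fun h => by
    have hmin : 2 * L ≤ L := hT ▸ Nat.sInf_le ⟨hL, h⟩
    omega
  have hdvd : (D : ℤ) ∣ 2 * p := by rcases hD with rfl | rfl <;> simp
  have hle : (D : ℤ) ≤ 2 * p := Int.le_of_dvd (by have := hp.pos; positivity) hdvd
  obtain ⟨k, rfl⟩ := Nat.exists_eq_add_one.mpr hL
  have hcop : IsCoprime (cfP D (k + 1)) p :=
    isCoprime_of_sq_lt_two_mul hp (cfP_succ_pos hns k).ne' ((cfP_succ_sq_lt hns k).trans_le hle)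
  exact eq_two_of_isCoprime hcop hdvd (cfQ_pos hns _).le hQ_ne_one
    (cfQ_dvd_two_mul_cfP hns hQ_period) (isCompleteQuotient_cfAlpha hns _).dvd
end

section
/- Let D be a positive integer that is not a perfect square. If T_D = 2L for some positive integer L and Q_L = 2, then P_L = a_L and a_L ∈ {⌊√D⌋ − 1, ⌊√D⌋}. -/
/-!
Write `αₖ = (√D + Pₖ) / Qₖ`. Both `αₖ` and its conjugate `βₖ = (Pₖ - √D) / Qₖ` satisfy the
recursion `z ↦ 1 / (z - aₖ)`. Since `aₖ ≥ 1` and `β₀ = -√D < 0`, it follows that `βₖ < 0` for all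
`k` and `-1 < βₖ` for `k ≥ 1`; hence `√D - Qₖ < Pₖ < √D` for `k ≥ 1`. The bound `αₖ - aₖ < 1` places
`Pₖ₊₁` in the same interval. If `Qₖ ∣ 2 Pₖ`, then `Qₖ` also divides
`Pₖ₊₁ - Pₖ = aₖ Qₖ - 2 Pₖ`, which forces `Pₖ₊₁ = Pₖ`. For `Qₖ = 2` this says `Pₖ = aₖ`, an integer
in `(√D - 2, √D)`.
-/

theorem dvd_sub_sq_mul_sub {R : Type*} [CommRing R] {d p q : R} (h : q ∣ d - p ^ 2) (a : R) :
    q ∣ d - (a * q - p) ^ 2 := by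
  have hdiff : d - (a * q - p) ^ 2 = d - p ^ 2 + q * (2 * a * p - a ^ 2 * q) := by ring
  exact hdiff ▸ h.add (dvd_mul_right _ _)

section CompleteQuotients

variable {x : ℝ}

theorem irrational_cfAlpha (hx : Irrational x) (k : ℕ) : Irrational (cfAlpha x k) := by
  induction k with
  | zero => exact hx
  | succ k ih =>
    rw [cfAlpha, one_div]
    exact (ih.sub_intCast _).inv

theorem one_lt_cfAlpha_succ (hx : Irrational x) (k : ℕ) : 1 < cfAlpha x (k + 1) := by
  have hfract : 0 < Int.fract (cfAlpha x k) :=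
    Int.fract_pos.2 ((irrational_cfAlpha hx k).ne_int _)
  exact one_lt_one_div hfract (Int.fract_lt_one _)

theorem one_le_cfA (hx : Irrational x) (h1 : 1 ≤ x) (k : ℕ) : 1 ≤ cfA x k := by
  refine Int.le_floor.2 ?_
  rw [Int.cast_one]
  cases k with
  | zero => exact h1
  | succ k => exact (one_lt_cfAlpha_succ hx k).le

end CompleteQuotients

section SquareRoot

variable {D : ℕ}

theorem cfPQ_fst_succ (D k : ℕ) :
    (cfPQ D (k + 1)).1 = cfA √D k * (cfPQ D k).2 - (cfPQ D k).1 :=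
  rfl

theorem cfPQ_snd_dvd (D k : ℕ) : (cfPQ D k).2 ∣ D - (cfPQ D k).1 ^ 2 := by
  induction k with
  | zero => exact one_dvd _
  | succ k ih => exact Int.ediv_dvd_of_dvd (dvd_sub_sq_mul_sub ih _)

theorem cfPQ_snd_mul_snd_succ (D k : ℕ) :
    (cfPQ D k).2 * (cfPQ D (k + 1)).2 = D - (cfPQ D (k + 1)).1 ^ 2 :=
  Int.mul_ediv_cancel' (dvd_sub_sq_mul_sub (cfPQ_snd_dvd D k) _)

theorem cfPQ_snd_ne_zero (hD : ¬ IsSquare D) (k : ℕ) : (cfPQ D k).2 ≠ 0 := by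
  cases k with
  | zero => exact one_ne_zero
  | succ k =>
    refine right_ne_zero_of_mul (a := (cfPQ D k).2) ?_
    rw [cfPQ_snd_mul_snd_succ, sub_ne_zero]
    intro hsq
    exact hD (Int.isSquare_natCast_iff.1 (hsq ▸ IsSquare.sq _))

theorem sqrt_sub_mul_sqrt_add_cfPQ_fst_succ (D k : ℕ) :
    (√D - (cfPQ D (k + 1)).1) * (√D + (cfPQ D (k + 1)).1) =
      (cfPQ D k).2 * (cfPQ D (k + 1)).2 := by
  have hQ : ((cfPQ D k).2 : ℝ) * (cfPQ D (k + 1)).2 = D - (cfPQ D (k + 1)).1 ^ 2 :=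
    mod_cast cfPQ_snd_mul_snd_succ D k
  rw [hQ]
  linear_combination Real.sq_sqrt (Nat.cast_nonneg (α := ℝ) D)

/-- The algebraic conjugate `(Pₖ - √D) / Qₖ` of the complete quotient `αₖ = (√D + Pₖ) / Qₖ`.
Its sign and its lower bound `-1` translate into the bounds on `Pₖ` in terms of `√D` and `Qₖ`. -/
noncomputable def cfConj (D k : ℕ) : ℝ :=
  ((cfPQ D k).1 - √D) / (cfPQ D k).2

theorem cfAlpha_sqrt_eq (hD : ¬ IsSquare D) (k : ℕ) :
    cfAlpha √D k = (√D + (cfPQ D k).1) / (cfPQ D k).2 := by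
  induction k with
  | zero => simp [cfAlpha, cfPQ]
  | succ k ih =>
    have hQ : ((cfPQ D k).2 : ℝ) ≠ 0 := mod_cast cfPQ_snd_ne_zero hD k
    have hQ' : ((cfPQ D (k + 1)).2 : ℝ) ≠ 0 := mod_cast cfPQ_snd_ne_zero hD (k + 1)
    have hP : √D - (cfPQ D (k + 1)).1 ≠ 0 :=
      sub_ne_zero.2 ((irrational_sqrt_natCast_iff.2 hD).ne_int _)
    have hfract : cfAlpha √D k - cfA √D k = (√D - (cfPQ D (k + 1)).1) / (cfPQ D k).2 := by
      rw [ih, cfPQ_fst_succ]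
      push_cast
      field_simp
      ring
    change 1 / (cfAlpha √D k - cfA √D k) = _
    rw [hfract, one_div_div, div_eq_div_iff hP hQ', mul_comm (√D + _),
      sqrt_sub_mul_sqrt_add_cfPQ_fst_succ]

theorem cfConj_succ (hD : ¬ IsSquare D) (k : ℕ) :
    cfConj D (k + 1) = 1 / (cfConj D k - cfA √D k) := by
  have hQ : ((cfPQ D k).2 : ℝ) ≠ 0 := mod_cast cfPQ_snd_ne_zero hD k
  have hQ' : ((cfPQ D (k + 1)).2 : ℝ) ≠ 0 := mod_cast cfPQ_snd_ne_zero hD (k + 1)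
  have hmul := sqrt_sub_mul_sqrt_add_cfPQ_fst_succ D k
  have hP : √D + (cfPQ D (k + 1)).1 ≠ 0 := right_ne_zero_of_mul (hmul ▸ mul_ne_zero hQ hQ')
  have hsub : cfConj D k - cfA √D k = -(√D + (cfPQ D (k + 1)).1) / (cfPQ D k).2 := by
    rw [cfConj, cfPQ_fst_succ]
    push_cast
    field_simp
    ring
  rw [hsub, one_div_div, cfConj, div_eq_div_iff hQ' (neg_ne_zero.2 hP)]
  linear_combination hmul

theorem one_lt_sqrt_of_not_isSquare (hD : ¬ IsSquare D) : 1 < √D := by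
  have h0 : D ≠ 0 := fun h => hD (h ▸ IsSquare.zero)
  have h1 : D ≠ 1 := fun h => hD (h ▸ IsSquare.one)
  rw [Real.lt_sqrt zero_le_one, one_pow]
  exact_mod_cast (by lia : 1 < D)

theorem one_le_cfA_sqrt (hD : ¬ IsSquare D) (k : ℕ) : (1 : ℝ) ≤ cfA √D k :=
  mod_cast one_le_cfA (irrational_sqrt_natCast_iff.2 hD) (one_lt_sqrt_of_not_isSquare hD).le k

theorem cfConj_neg (hD : ¬ IsSquare D) (k : ℕ) : cfConj D k < 0 := by
  induction k with
  | zero => simpa [cfConj, cfPQ] using one_pos.trans (one_lt_sqrt_of_not_isSquare hD)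
  | succ k ih =>
    rw [cfConj_succ hD]
    exact one_div_neg.2 (by linarith [one_le_cfA_sqrt hD k])

theorem neg_one_lt_cfConj_succ (hD : ¬ IsSquare D) (k : ℕ) : -1 < cfConj D (k + 1) := by
  have hlt : cfConj D k - cfA √D k < -1 := by
    linarith [cfConj_neg hD k, one_le_cfA_sqrt hD k]
  rw [cfConj_succ hD]
  simpa using one_div_lt_one_div_of_neg_of_lt neg_one_lt_zero hlt

theorem cfPQ_snd_pos (hD : ¬ IsSquare D) (k : ℕ) : 0 < (cfPQ D k).2 := by
  have hsqrt : 0 < √D := one_pos.trans (one_lt_sqrt_of_not_isSquare hD)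
  have hα : 0 < cfAlpha √D k :=
    (one_pos.trans_le (one_le_cfA_sqrt hD k)).trans_le (Int.floor_le _)
  have hdiff : cfAlpha √D k - cfConj D k = 2 * √D / (cfPQ D k).2 := by
    rw [cfAlpha_sqrt_eq hD, cfConj]
    ring
  have hpos : 0 < 2 * √D / (cfPQ D k).2 := hdiff ▸ sub_pos.2 ((cfConj_neg hD k).trans hα)
  exact_mod_cast (div_pos_iff_of_pos_left (by positivity)).1 hpos

theorem cfPQ_fst_lt_sqrt (hD : ¬ IsSquare D) (k : ℕ) : (cfPQ D k).1 < √D := by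
  have hQ : (0 : ℝ) < (cfPQ D k).2 := mod_cast cfPQ_snd_pos hD k
  have hconj := cfConj_neg hD k
  rwa [cfConj, div_lt_iff₀ hQ, zero_mul, sub_neg] at hconj

theorem sqrt_lt_cfPQ_fst_succ_add_snd_succ (hD : ¬ IsSquare D) (k : ℕ) :
    √D < (cfPQ D (k + 1)).1 + (cfPQ D (k + 1)).2 := by
  have hQ : (0 : ℝ) < (cfPQ D (k + 1)).2 := mod_cast cfPQ_snd_pos hD (k + 1)
  have hconj := neg_one_lt_cfConj_succ hD k
  rw [cfConj, lt_div_iff₀ hQ] at hconj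
  linarith

theorem sqrt_lt_cfPQ_fst_succ_add_snd (hD : ¬ IsSquare D) (k : ℕ) :
    √D < (cfPQ D (k + 1)).1 + (cfPQ D k).2 := by
  have hQ : (0 : ℝ) < (cfPQ D k).2 := mod_cast cfPQ_snd_pos hD k
  have hfloor : cfAlpha √D k < cfA √D k + 1 := Int.lt_floor_add_one _
  rw [cfAlpha_sqrt_eq hD, div_lt_iff₀ hQ] at hfloor
  rw [cfPQ_fst_succ]
  push_cast
  linarith

theorem cfPQ_fst_succ_eq_of_dvd_two_mul (hD : ¬ IsSquare D) {k : ℕ} (hk : k ≠ 0)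
    (hdvd : (cfPQ D k).2 ∣ 2 * (cfPQ D k).1) : (cfPQ D (k + 1)).1 = (cfPQ D k).1 := by
  obtain ⟨j, rfl⟩ := Nat.exists_eq_succ_of_ne_zero hk
  have hdvd_sub : (cfPQ D (j + 1)).2 ∣ (cfPQ D (j + 2)).1 - (cfPQ D (j + 1)).1 := by
    rw [cfPQ_fst_succ D (j + 1), sub_sub, ← two_mul]
    exact (dvd_mul_left _ _).sub hdvd
  have hle : ((cfPQ D (j + 2)).1 : ℝ) < (cfPQ D (j + 1)).1 + (cfPQ D (j + 1)).2 :=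
    (cfPQ_fst_lt_sqrt hD _).trans (sqrt_lt_cfPQ_fst_succ_add_snd_succ hD j)
  have hge : ((cfPQ D (j + 1)).1 : ℝ) < (cfPQ D (j + 2)).1 + (cfPQ D (j + 1)).2 :=
    (cfPQ_fst_lt_sqrt hD _).trans (sqrt_lt_cfPQ_fst_succ_add_snd hD (j + 1))
  norm_cast at hle hge
  exact sub_eq_zero.1 (Int.eq_zero_of_abs_lt_dvd hdvd_sub (abs_lt.2 ⟨by lia, by lia⟩))

theorem stmt_6_general (D : ℕ) (hns : ¬ IsSquare D) (L : ℕ) (hQ : (cfPQ D L).2 = 2) :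
    (cfPQ D L).1 = cfA √D L ∧ (cfA √D L = ⌊√D⌋ - 1 ∨ cfA √D L = ⌊√D⌋) := by
  have hL : L ≠ 0 := by
    rintro rfl
    simp [cfPQ] at hQ
  have hfix : (cfPQ D (L + 1)).1 = (cfPQ D L).1 :=
    cfPQ_fst_succ_eq_of_dvd_two_mul hns hL (hQ ▸ dvd_mul_right _ _)
  have hPa : (cfPQ D L).1 = cfA √D L := by
    rw [cfPQ_fst_succ, hQ] at hfix
    lia
  have hle : (cfPQ D L).1 ≤ ⌊√D⌋ := Int.le_floor.2 (cfPQ_fst_lt_sqrt hns L).le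
  have hlt : ⌊√D⌋ < (cfPQ D L).1 + 2 := by
    have hsqrt := sqrt_lt_cfPQ_fst_succ_add_snd hns L
    rw [hfix, hQ] at hsqrt
    exact Int.floor_lt.2 (mod_cast hsqrt)
  exact ⟨hPa, by lia⟩

end SquareRoot

theorem stmt_6 (D : ℕ) (hD : 0 < D) (hns : ¬ IsSquare D) (L : ℕ) (hL : 0 < L)
    (hT : cfPeriod (Real.sqrt D) = 2 * L) (hQ : (cfPQ D L).2 = 2) :
    (cfPQ D L).1 = cfA (Real.sqrt D) L ∧
      (cfA (Real.sqrt D) L = ⌊Real.sqrt D⌋ - 1 ∨ cfA (Real.sqrt D) L = ⌊Real.sqrt D⌋) :=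
  stmt_6_general D hns L hQ
end
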